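/- arXiv:1507.01626 — 4 statements merged into one kernel-verified Lean document; each statement's English description precedes it below -/
import Mathlib

section
/- Let 𝔊 = A ⊕ L carry the bracket [(a₁,ξ₁),(a₂,ξ₂)] = (0, [ξ₁,ξ₂] + D_{a₁}ξ₂ − D_{a₂}ξ₁). Then this bracket satisfies the Jacobi identity (so 𝔊 is a Lie algebra), and the bilinear map γ : 𝔊 × 𝔊 → V defined by γ((a₁,ξ₁),(a₂,ξ₂)) = B(ξ₁, Dξ₂) is a V-valued 2-cocycle on 𝔊: it is alternating (γ(u,u) = 0 for all u ∈ 𝔊) and satisfies γ([u,v],w) + γ([v,w],u) + γ([w,u],v) = 0 for all u,v,w ∈ 𝔊, and hence defines a central extension 0 → V → 𝔊̃ → 𝔊 → 0. -/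
/-- The bracket on 𝔊 = A ⊕ L: [(a₁,ξ₁),(a₂,ξ₂)] = (0, [ξ₁,ξ₂] + D_{a₁}ξ₂ − D_{a₂}ξ₁). -/
def bwBracket {A L : Type*} [AddCommGroup A] [Module ℝ A] [LieRing L] [LieAlgebra ℝ L]
    (Df : A →ₗ[ℝ] L →ₗ[ℝ] L) (u v : A × L) : A × L :=
  (0, ⁅u.2, v.2⁆ + Df u.1 v.2 - Df v.1 u.2)

/-- The V-valued 2-cochain γ((a₁,ξ₁),(a₂,ξ₂)) = B(ξ₁, Dξ₂). -/
def bwGamma {A V L : Type*} [AddCommGroup V] [Module ℝ V] [LieRing L] [LieAlgebra ℝ L]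
    (B : L →ₗ[ℝ] L →ₗ[ℝ] V) (D : L →ₗ[ℝ] L) (u v : A × L) : V :=
  B u.2 (D v.2)

/-- The bracket on 𝔊 = A ⊕ L satisfies the Jacobi identity, and
γ((a₁,ξ₁),(a₂,ξ₂)) = B(ξ₁, Dξ₂) is an alternating V-valued 2-cocycle on 𝔊,
hence defines a central extension 0 → V → 𝔊̃ → 𝔊 → 0. -/
theorem stmt_0 {A V L : Type*} [AddCommGroup A] [Module ℝ A]
    [AddCommGroup V] [Module ℝ V] [LieRing L] [LieAlgebra ℝ L]
    (B : L →ₗ[ℝ] L →ₗ[ℝ] V)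
    (hBsymm : ∀ x y : L, B x y = B y x)
    (hBinv : ∀ x y z : L, B ⁅z, x⁆ y + B x ⁅z, y⁆ = 0)
    (D : L →ₗ[ℝ] L)
    (hDder : ∀ x y : L, D ⁅x, y⁆ = ⁅D x, y⁆ + ⁅x, D y⁆)
    (hDskew : ∀ x y : L, B (D x) y + B x (D y) = 0)
    (Df : A →ₗ[ℝ] L →ₗ[ℝ] L)
    (hDfder : ∀ (a : A) (x y : L), Df a ⁅x, y⁆ = ⁅Df a x, y⁆ + ⁅x, Df a y⁆)
    (hDfskew : ∀ (a : A) (x y : L), B (Df a x) y + B x (Df a y) = 0)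
    (hDfcomm : ∀ (a b : A) (x : L), Df a (Df b x) = Df b (Df a x))
    (hDfD : ∀ (a : A) (x : L), Df a (D x) = D (Df a x)) :
    (∀ u v w : A × L,
      bwBracket Df (bwBracket Df u v) w + bwBracket Df (bwBracket Df v w) u +
        bwBracket Df (bwBracket Df w u) v = 0) ∧
    (∀ u : A × L, bwGamma B D u u = 0) ∧
    (∀ u v w : A × L,
      bwGamma B D (bwBracket Df u v) w + bwGamma B D (bwBracket Df v w) u +
        bwGamma B D (bwBracket Df w u) v = 0) := by
  refine ⟨?_, ?_, ?_⟩
  · rintro ⟨a, x⟩ ⟨b, y⟩ ⟨c, z⟩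
    ext
    · simp [bwBracket]
    · have hJ : ⁅⁅x, y⁆, z⁆ + ⁅⁅y, z⁆, x⁆ + ⁅⁅z, x⁆, y⁆ = 0 := by
        have h := lie_jacobi x y z
        rw [← lie_skew ⁅x, y⁆ z, ← lie_skew ⁅y, z⁆ x, ← lie_skew ⁅z, x⁆ y]
        rw [← neg_eq_zero, ← h]
        abel
      simp only [bwBracket, Prod.snd_add, Prod.snd_zero, map_zero, LinearMap.zero_apply,
        map_add, map_sub, add_lie, sub_lie, hDfder]
      rw [hDfcomm c a y, hDfcomm c b x, hDfcomm b a z,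
        ← lie_skew x (Df c y), ← lie_skew y (Df a z), ← lie_skew z (Df b x)]
      refine Eq.trans ?_ hJ
      abel
  · rintro ⟨a, x⟩
    have h := hDskew x x
    rw [hBsymm (D x) x] at h
    rw [← two_smul ℝ] at h
    exact (smul_eq_zero.mp h).resolve_left two_ne_zero
  · rintro ⟨a, x⟩ ⟨b, y⟩ ⟨c, z⟩
    have key : ∀ (a : A) (y z : L), B (Df a y) (D z) = B (Df a z) (D y) := by
      intro a y z
      rw [eq_neg_of_add_eq_zero_left (hDfskew a z (D y)), hDfD,
        ← eq_neg_of_add_eq_zero_left (hDskew z (Df a y)), hBsymm]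
    have h1 : B ⁅x, y⁆ (D z) + B ⁅y, z⁆ (D x) + B ⁅z, x⁆ (D y) = 0 := by
      have e1 := hDskew ⁅x, y⁆ z
      rw [hDder, map_add, LinearMap.add_apply] at e1
      have e2 := hBinv (D x) z y
      rw [← lie_skew, map_neg, LinearMap.neg_apply] at e2
      have e3 := hBinv (D y) z x
      rw [← lie_skew x z, map_neg, hBsymm (D y)] at e3
      rw [hBsymm (D x)] at e2
      have e2' := neg_add_eq_zero.mp e2
      have e3' := add_neg_eq_zero.mp e3
      rw [e2', e3'] at e1
      rw [← e1]
      abel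
    simp only [bwGamma, bwBracket, map_add, map_sub, LinearMap.add_apply, LinearMap.sub_apply]
    rw [key a y z, key b z x, key c x y, ← h1]
    abel
end

section
/- If there exists x ∈ 𝔤 with B(x,x) ≠ 0, then the loop-algebra cocycle ω is non-trivial: there exist ξ, η ∈ L𝔤 with ⁅ξ(t),η(t)⁆ = 0 for all t ∈ ℝ but ω(ξ,η) ≠ 0 (for instance ξ(t) = cos(2πt)·x and η(t) = sin(2πt)·x, for which ω(ξ,η) = π·B(x,x)); consequently there is no linear functional μ on L𝔤 with ω(ξ₁,ξ₂) = μ(⁅ξ₁,ξ₂⁆) for all ξ₁,ξ₂, i.e. ω is not a 2-coboundary. -/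
/-- The loop-algebra 2-cochain ω(ξ₁,ξ₂) = ∫₀¹ B(ξ₁(t), ξ₂′(t)) dt. -/
noncomputable def loopCocycle {g : Type*} [NormedAddCommGroup g] [NormedSpace ℝ g]
    (B : g →ₗ[ℝ] g →ₗ[ℝ] ℝ) (ξ η : ℝ → g) : ℝ :=
  ∫ t in (0:ℝ)..1, B (ξ t) (deriv η t)

/-- If there is x ∈ 𝔤 with B(x,x) ≠ 0, the loop-algebra cocycle ω is non-trivial:
there are smooth 1-periodic loops ξ, η with pointwise-vanishing bracket but
ω(ξ,η) ≠ 0 (for instance ξ(t) = cos(2πt)·x, η(t) = sin(2πt)·x, for which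
ω(ξ,η) = π·B(x,x)); consequently there is no linear functional μ with
ω(ξ₁,ξ₂) = μ(⁅ξ₁,ξ₂⁆) on the loop algebra, i.e. ω is not a 2-coboundary. -/
theorem stmt_2 {g : Type*} [NormedAddCommGroup g] [NormedSpace ℝ g]
    [FiniteDimensional ℝ g]
    (br : g →ₗ[ℝ] g →ₗ[ℝ] g)
    (hbr_alt : ∀ x : g, br x x = 0)
    (hbr_jacobi : ∀ x y z : g, br (br x y) z + br (br y z) x + br (br z x) y = 0)
    (B : g →ₗ[ℝ] g →ₗ[ℝ] ℝ)
    (hBsymm : ∀ x y : g, B x y = B y x)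
    (hBinv : ∀ x y z : g, B (br z x) y + B x (br z y) = 0)
    (x : g) (hx : B x x ≠ 0) :
    (∃ ξ η : ℝ → g,
      ξ = (fun t : ℝ => Real.cos (2 * Real.pi * t) • x) ∧
      η = (fun t : ℝ => Real.sin (2 * Real.pi * t) • x) ∧
      ContDiff ℝ (⊤ : ℕ∞) ξ ∧ Function.Periodic ξ 1 ∧
      ContDiff ℝ (⊤ : ℕ∞) η ∧ Function.Periodic η 1 ∧
      (∀ t : ℝ, br (ξ t) (η t) = 0) ∧
      loopCocycle B ξ η = Real.pi * B x x ∧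
      loopCocycle B ξ η ≠ 0) ∧
    ¬ ∃ μ : (ℝ → g) →ₗ[ℝ] ℝ,
      ∀ ξ η : ℝ → g,
        ContDiff ℝ (⊤ : ℕ∞) ξ → Function.Periodic ξ 1 →
        ContDiff ℝ (⊤ : ℕ∞) η → Function.Periodic η 1 →
        loopCocycle B ξ η = μ (fun t => br (ξ t) (η t)) := by
  have hc : ContDiff ℝ (⊤ : ℕ∞) (fun t : ℝ => Real.cos (2 * Real.pi * t) • x) := by fun_prop
  have hs : ContDiff ℝ (⊤ : ℕ∞) (fun t : ℝ => Real.sin (2 * Real.pi * t) • x) := by fun_prop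
  have pc : Function.Periodic (fun t : ℝ => Real.cos (2 * Real.pi * t) • x) 1 := by
    intro t
    simp only [mul_add, mul_one, Real.cos_add_two_pi]
  have ps : Function.Periodic (fun t : ℝ => Real.sin (2 * Real.pi * t) • x) 1 := by
    intro t
    simp only [mul_add, mul_one, Real.sin_add_two_pi]
  have hb : ∀ t : ℝ, br (Real.cos (2 * Real.pi * t) • x) (Real.sin (2 * Real.pi * t) • x) = 0 := by
    intro t
    simp [hbr_alt]
  have hl : ∀ t : ℝ, HasDerivAt (fun t : ℝ => 2 * Real.pi * t) (2 * Real.pi) t := by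
    intro t
    simpa using (hasDerivAt_id t).const_mul (2 * Real.pi)
  have hd : ∀ t : ℝ, deriv (fun t : ℝ => Real.sin (2 * Real.pi * t) • x) t
      = (Real.cos (2 * Real.pi * t) * (2 * Real.pi)) • x := fun t =>
    ((hl t).sin.smul_const x).deriv
  have hv : loopCocycle B (fun t : ℝ => Real.cos (2 * Real.pi * t) • x)
      (fun t : ℝ => Real.sin (2 * Real.pi * t) • x) = Real.pi * B x x := by
    unfold loopCocycle
    simp only [hd, map_smul, LinearMap.smul_apply, smul_eq_mul]
    rw [intervalIntegral.integral_eq_sub_of_hasDerivAt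
      (f := fun t : ℝ => (Real.pi * t
        + Real.sin (2 * Real.pi * t) * Real.cos (2 * Real.pi * t) / 2) * B x x)]
    · simp
    · intro t _
      have h1 := (((hasDerivAt_id t).const_mul Real.pi).add
        (((hl t).sin.mul (hl t).cos).div_const 2)).mul_const (B x x)
      refine h1.congr_deriv ?_
      have := Real.sin_sq_add_cos_sq (2 * Real.pi * t)
      linear_combination (-(Real.pi * B x x)) * this
    · apply Continuous.intervalIntegrable
      fun_prop
  have hne : loopCocycle B (fun t : ℝ => Real.cos (2 * Real.pi * t) • x)
      (fun t : ℝ => Real.sin (2 * Real.pi * t) • x) ≠ 0 := by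
    rw [hv]
    exact mul_ne_zero Real.pi_ne_zero hx
  refine ⟨⟨_, _, rfl, rfl, hc, pc, hs, ps, hb, hv, hne⟩, ?_⟩
  rintro ⟨μ, hμ⟩
  apply hne
  rw [hμ _ _ hc pc hs ps]
  simp only [hb]
  exact map_zero μ
end

section
/- For all X,Y,W,Z ∈ ǧ, the bracket of β-values satisfies the identity [β(X,Y),β(W,Z)] = −β(β([W,X],Y),Z) − β(β(X,[W,Y]),Z) + β(β([Z,X],Y),W) + β(β(X,[Z,Y]),W). -/
/-- The bracket on ǧ = ℝ ⊕ L: [(t₁,X₁),(t₂,X₂)] = (0, [X₁,X₂] + t₁·DX₂ − t₂·DX₁). -/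
def cBracket {L : Type*} [LieRing L] [LieAlgebra ℝ L]
    (D : L →ₗ[ℝ] L) (u v : ℝ × L) : ℝ × L :=
  (0, ⁅u.2, v.2⁆ + u.1 • D v.2 - v.1 • D u.2)

/-- The map β : ǧ × ǧ → ǧ, β((t,X),(s,Y)) = (0, s·X − t·Y). -/
def betaMap {L : Type*} [LieRing L] [LieAlgebra ℝ L] (u v : ℝ × L) : ℝ × L :=
  (0, v.1 • u.2 - u.1 • v.2)

/-- For all X,Y,W,Z ∈ ǧ:
[β(X,Y),β(W,Z)] = −β(β([W,X],Y),Z) − β(β(X,[W,Y]),Z) + β(β([Z,X],Y),W) + β(β(X,[Z,Y]),W). -/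
theorem stmt_10 {L : Type*} [LieRing L] [LieAlgebra ℝ L] (D : L →ₗ[ℝ] L) :
    ∀ X Y W Z : ℝ × L,
      cBracket D (betaMap X Y) (betaMap W Z) =
        -betaMap (betaMap (cBracket D W X) Y) Z -
          betaMap (betaMap X (cBracket D W Y)) Z +
          betaMap (betaMap (cBracket D Z X) Y) W +
          betaMap (betaMap X (cBracket D Z Y)) W := by
  rintro ⟨x, X⟩ ⟨y, Y⟩ ⟨w, W⟩ ⟨z, Z⟩
  ext
  · simp [cBracket, betaMap]
  · simp only [cBracket, betaMap, Prod.snd_add, Prod.snd_sub, Prod.snd_neg, sub_lie, lie_sub,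
      smul_lie, lie_smul]
    rw [← lie_skew W X, ← lie_skew W Y, ← lie_skew Z X, ← lie_skew Z Y]
    module
end

section
/- Suppose the T-action on M is free (φ + m = m for some m implies φ = 0), the G-action on P is free (x·g = x for some x implies g = 1), and the fibers of p are single G-orbits (p(x) = p(y) implies y = x·g for some g ∈ G). If f and f′ are equivariant loops such that p(f′(0)) lies in the T-orbit of p(f(0)) in M, then there exists a unique (φ,γ) ∈ Ǧ with f′ = f·(φ,γ). Thus Ǧ acts freely and transitively on the set of equivariant loops lying over a given T-orbit — the set-theoretic content of the paper's claim that the equivariant loop space Q_P is a principal Ǧ-bundle over Σ = M/T. -/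
/-- Multiplication of the semidirect product Ǧ = T ⋉_ρ LG:
(φ₁,γ₁)·(φ₂,γ₂) = (φ₁+φ₂, γ₁·ρ_{φ₁}(γ₂)). -/
def gMul {T G : Type*} [AddCommGroup T] [Group G] (a b : T × (T → G)) : T × (T → G) :=
  (a.1 + b.1, fun θ => a.2 θ * b.2 (θ - a.1))

/-- The action of Ǧ on maps f : T → P: (f·(φ,γ))(θ) = f(θ+φ)·γ(θ+φ). -/
def fAct {T G P : Type*} [AddCommGroup T] [Group G] (act : P → G → P)
    (f : T → P) (a : T × (T → G)) : T → P :=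
  fun θ => act (f (θ + a.1)) (a.2 (θ + a.1))

/-- Equivariant loops: f : T → P with p(f(θ+φ)) = φ + p(f(θ)). -/
def IsEquivLoop {T P M : Type*} [AddCommGroup T] [AddAction T M]
    (p : P → M) (f : T → P) : Prop :=
  ∀ θ φ : T, p (f (θ + φ)) = φ +ᵥ p (f θ)

/-- If the T-action on M is free, the G-action on P is free, and the fibers of p
are single G-orbits, then for equivariant loops f, f′ with p(f′(0)) in the T-orbit
of p(f(0)) there is a unique (φ,γ) ∈ Ǧ with f′ = f·(φ,γ): Ǧ acts freely and
transitively on the equivariant loops over a given T-orbit. -/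
theorem stmt_13 {T G P M : Type*} [AddCommGroup T] [Group G] [AddAction T M]
    (act : P → G → P)
    (hact_one : ∀ x : P, act x 1 = x)
    (hact_mul : ∀ (x : P) (g h : G), act (act x g) h = act x (g * h))
    (p : P → M)
    (hp : ∀ (x : P) (g : G), p (act x g) = p x)
    (hTfree : ∀ (φ : T) (m : M), φ +ᵥ m = m → φ = 0)
    (hGfree : ∀ (x : P) (g : G), act x g = x → g = 1)
    (hOrbit : ∀ x y : P, p x = p y → ∃ g : G, y = act x g) :
    ∀ f f' : T → P, IsEquivLoop p f → IsEquivLoop p f' →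
      (∃ ψ : T, p (f' 0) = ψ +ᵥ p (f 0)) →
      ∃! a : T × (T → G), f' = fAct act f a := by
  intro f f' hf hf' ⟨ψ, hψ⟩
  have key : ∀ θ, p (f (θ + ψ)) = p (f' θ) := by
    intro θ
    have h1 := hf' 0 θ
    have h2 := hf 0 (θ + ψ)
    rw [zero_add] at h1 h2
    rw [h1, h2, hψ, add_vadd]
  choose g hg using fun θ => hOrbit _ _ (key θ)
  refine ⟨(ψ, fun θ => g (θ - ψ)), ?_, ?_⟩
  · funext θ
    simp only [fAct, add_sub_cancel_right]
    exact hg θ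
  · rintro ⟨b, δ⟩ h
    have hb : b = ψ := by
      have h0 := congrArg p (congrFun h 0)
      simp only [fAct, hp] at h0
      rw [hf 0 b, hψ] at h0
      have h3 : (-b + ψ) +ᵥ p (f 0) = p (f 0) := by
        rw [add_vadd, h0, neg_vadd_vadd]
      exact neg_add_eq_zero.mp (hTfree _ _ h3)
    subst hb
    have hd : δ = fun θ => g (θ - b) := by
      funext θ
      have h1 := congrFun h (θ - b)
      have h2 := hg (θ - b)
      simp only [fAct, sub_add_cancel] at h1 h2
      rw [h1] at h2
      have h4 : act (f θ) (δ θ * (g (θ - b))⁻¹) = f θ := by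
        rw [← hact_mul, h2, hact_mul, mul_inv_cancel, hact_one]
      exact mul_inv_eq_one.mp (hGfree _ _ h4)
    rw [hd]
end
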